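/- arXiv:2406.09049 — 3 statements merged into one kernel-verified Lean document; each statement's English description precedes it below -/
import Mathlib

section
/- Let G and G' be bow-free acyclic path diagrams on the same finite vertex type V. Then the closure of M(G) in the Euclidean topology on Matrix V V ℝ is contained in the Euclidean closure of M(G') if and only if A(G) ⊆ A(G'). (Theorem 4 of the paper.) -/
open Matrix

structure MixedGraph (V : Type*) where
  D : V → V → Prop
  B : V → V → Prop
  symm : ∀ v w, B v w → B w v
  irrefl : ∀ v, ¬ B v v

namespace MixedGraph

variable {V : Type*}

/-- The graph is acyclic: no directed cycles. -/
def Acyclic (G : MixedGraph V) : Prop := ∀ v, ¬ Relation.TransGen G.D v v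

/-- The graph is simple: for distinct `v, w`, at most one of
`D v w`, `D w v`, `B v w` holds. -/
def Simple (G : MixedGraph V) : Prop :=
  ∀ v w, v ≠ w →
    ¬ (G.D v w ∧ G.D w v) ∧ ¬ (G.D v w ∧ G.B v w) ∧ ¬ (G.D w v ∧ G.B v w)

/-- A bow-free acyclic path diagram: a simple acyclic mixed graph. -/
def IsBAP (G : MixedGraph V) : Prop := G.Acyclic ∧ G.Simple

/-- `Λ` is compatible with `G`. -/
def LamCompat (G : MixedGraph V) (Λ : Matrix V V ℝ) : Prop :=
  ∀ v w, ¬ G.D v w → Λ v w = 0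

/-- `Ω` is compatible with `G`. -/
def OmCompat [Fintype V] (G : MixedGraph V) (Ω : Matrix V V ℝ) : Prop :=
  Ω.PosDef ∧ ∀ v w, v ≠ w → ¬ G.B v w → ¬ G.B w v → Ω v w = 0

/-- The model `M(G)` of a mixed graph. -/
def model [Fintype V] [DecidableEq V] (G : MixedGraph V) : Set (Matrix V V ℝ) :=
  {S | ∃ Λ Ω : Matrix V V ℝ, G.LamCompat Λ ∧ G.OmCompat Ω ∧
    S = ((1 - Λ)⁻¹)ᵀ * Ω * (1 - Λ)⁻¹}

/-- The algebraic model `A(G)`: the real Zariski closure of `M(G)`. -/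
def algModel [Fintype V] [DecidableEq V] (G : MixedGraph V) : Set (Matrix V V ℝ) :=
  {S | ∀ p : MvPolynomial (V × V) ℝ,
    (∀ T ∈ G.model, MvPolynomial.eval (fun e => T e.1 e.2) p = 0) →
    MvPolynomial.eval (fun e => S e.1 e.2) p = 0}

/-- The skeleton (adjacency relation) of `G`. -/
def adj (G : MixedGraph V) (v w : V) : Prop :=
  v ≠ w ∧ (G.D v w ∨ G.D w v ∨ G.B v w)

/-- A collider triple of `G`. -/
def ColliderTriple (G : MixedGraph V) (u v w : V) : Prop :=
  u ≠ v ∧ v ≠ w ∧ u ≠ w ∧ (G.D u v ∨ G.B u v) ∧ (G.D w v ∨ G.B w v)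

/-- A v-structure of `G`. -/
def VStructure (G : MixedGraph V) (u v w : V) : Prop :=
  G.ColliderTriple u v w ∧ ¬ G.adj u w

end MixedGraph

namespace MixedGraph

section RegularFunctions

variable {V : Type*}

/-- The evaluation of a polynomial in the entries of a matrix. -/
noncomputable def evalMat (S : Matrix V V ℝ) : MvPolynomial (V × V) ℝ →+* ℝ :=
  MvPolynomial.eval fun e => S e.1 e.2

/-- `f` agrees with a quotient of polynomials in the matrix entries, wherever the denominator does
not vanish, and the denominator does not vanish at the identity matrix. -/
def IsRegularAtOne [DecidableEq V] (f : Matrix V V ℝ → ℝ) : Prop :=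
  ∃ p q : MvPolynomial (V × V) ℝ, evalMat 1 q ≠ 0 ∧
    ∀ S, evalMat S q ≠ 0 → evalMat S q * f S = evalMat S p

namespace IsRegularAtOne

variable [DecidableEq V] {f g : Matrix V V ℝ → ℝ}

lemma const (c : ℝ) : IsRegularAtOne fun _ : Matrix V V ℝ => c :=
  ⟨MvPolynomial.C c, 1, by simp, fun S _ => by simp [evalMat]⟩

lemma entry (i j : V) : IsRegularAtOne fun S : Matrix V V ℝ => S i j :=
  ⟨MvPolynomial.X (i, j), 1, by simp, fun S _ => by simp [evalMat]⟩

lemma add (hf : IsRegularAtOne f) (hg : IsRegularAtOne g) :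
    IsRegularAtOne fun S => f S + g S := by
  obtain ⟨p, q, hq, h⟩ := hf
  obtain ⟨p', q', hq', h'⟩ := hg
  refine ⟨p * q' + p' * q, q * q', by simp [hq, hq'], fun S hS => ?_⟩
  rw [map_mul] at hS
  simp only [map_mul, map_add, ← h S (left_ne_zero_of_mul hS), ← h' S (right_ne_zero_of_mul hS)]
  ring

lemma mul (hf : IsRegularAtOne f) (hg : IsRegularAtOne g) :
    IsRegularAtOne fun S => f S * g S := by
  obtain ⟨p, q, hq, h⟩ := hf
  obtain ⟨p', q', hq', h'⟩ := hg
  refine ⟨p * p', q * q', by simp [hq, hq'], fun S hS => ?_⟩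
  rw [map_mul] at hS
  simp only [map_mul, ← h S (left_ne_zero_of_mul hS), ← h' S (right_ne_zero_of_mul hS)]
  ring

lemma inv (hf : IsRegularAtOne f) (h1 : f 1 ≠ 0) : IsRegularAtOne fun S => (f S)⁻¹ := by
  obtain ⟨p, q, hq, h⟩ := hf
  refine ⟨q * q, p * q, ?_, fun S hS => ?_⟩
  · simp [← h 1 hq, hq, h1]
  · rw [map_mul] at hS
    have hp := left_ne_zero_of_mul hS
    rw [← h S (right_ne_zero_of_mul hS)] at hp
    have := right_ne_zero_of_mul hp
    simp only [map_mul, ← h S (right_ne_zero_of_mul hS)]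
    field_simp

lemma sub (hf : IsRegularAtOne f) (hg : IsRegularAtOne g) :
    IsRegularAtOne fun S => f S - g S := by
  simpa [sub_eq_add_neg] using hf.add ((const (-1)).mul hg)

lemma sum {ι : Type*} (s : Finset ι) {F : ι → Matrix V V ℝ → ℝ}
    (hF : ∀ i ∈ s, IsRegularAtOne (F i)) : IsRegularAtOne fun S => ∑ i ∈ s, F i S := by
  classical
  induction s using Finset.induction_on with
  | empty => simpa using const 0
  | insert a s ha ih =>
    simp only [Finset.sum_insert ha]
    exact (hF a (by simp)).add (ih fun i hi => hF i (by simp [hi]))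

lemma prod {ι : Type*} (s : Finset ι) {F : ι → Matrix V V ℝ → ℝ}
    (hF : ∀ i ∈ s, IsRegularAtOne (F i)) : IsRegularAtOne fun S => ∏ i ∈ s, F i S := by
  classical
  induction s using Finset.induction_on with
  | empty => simpa using const 1
  | insert a s ha ih =>
    simp only [Finset.prod_insert ha]
    exact (hF a (by simp)).mul (ih fun i hi => hF i (by simp [hi]))

variable [Fintype V] {M N : Matrix V V ℝ → Matrix V V ℝ}

lemma matrix_mul (hM : ∀ i j, IsRegularAtOne fun S => M S i j)
    (hN : ∀ i j, IsRegularAtOne fun S => N S i j) (i j : V) :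
    IsRegularAtOne fun S => (M S * N S) i j := by
  simp only [Matrix.mul_apply]
  exact sum _ fun k _ => (hM i k).mul (hN k j)

lemma det (hM : ∀ i j, IsRegularAtOne fun S => M S i j) :
    IsRegularAtOne fun S => (M S).det := by
  simp only [Matrix.det_apply']
  exact sum _ fun σ _ => (const _).mul (prod _ fun i _ => hM _ _)

lemma matrix_inv (hM : ∀ i j, IsRegularAtOne fun S => M S i j) (h1 : (M 1).det ≠ 0) (i j : V) :
    IsRegularAtOne fun S => (M S)⁻¹ i j := by
  simp only [Matrix.inv_def, Matrix.smul_apply, smul_eq_mul, Ring.inverse_eq_inv',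
    Matrix.adjugate_apply]
  refine ((det hM).inv h1).mul (det fun k l => ?_)
  simp only [Matrix.updateRow_apply]
  split_ifs
  · exact const _
  · exact hM _ _

end IsRegularAtOne

end RegularFunctions

section Acyclic

lemma Acyclic.exists_height {V : Type*} [Fintype V] {G : MixedGraph V} (hG : G.Acyclic) :
    ∃ h : V → ℕ, (∀ u v, G.D u v → h u < h v) ∧ ∀ v, h v < Fintype.card V := by
  classical
  refine ⟨fun v => (Finset.univ.filter fun u => Relation.TransGen G.D u v).card,
    fun u v huv => Finset.card_lt_card ?_, fun v => Finset.card_lt_univ_of_notMem (x := v) ?_⟩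
  · refine Finset.ssubset_iff_of_subset (fun w hw => ?_) |>.2 ⟨u, ?_, ?_⟩
    · simp only [Finset.mem_filter, Finset.mem_univ, true_and] at hw ⊢
      exact hw.tail huv
    · simpa using Relation.TransGen.single huv
    · simpa using hG u
  · simpa using hG v

variable {V : Type*} [Fintype V] [DecidableEq V] {G : MixedGraph V}

lemma Acyclic.pow_card_eq_zero (hG : G.Acyclic) {L : Matrix V V ℝ} (hL : G.LamCompat L) :
    L ^ Fintype.card V = 0 := by
  obtain ⟨h, hD, hlt⟩ := hG.exists_height
  have key : ∀ (k : ℕ) (u v : V), (L ^ k) u v ≠ 0 → h u + k ≤ h v := by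
    intro k
    induction k with
    | zero =>
      intro u v huv
      rw [pow_zero, Matrix.one_apply] at huv
      have : u = v := by by_contra hne; simp [hne] at huv
      simp [this]
    | succ k ih =>
      intro u v huv
      rw [pow_succ, Matrix.mul_apply] at huv
      obtain ⟨w, -, hw⟩ := Finset.exists_ne_zero_of_sum_ne_zero huv
      have h1 := ih u w (left_ne_zero_of_mul hw)
      have h2 := hD w v (by by_contra hn; exact right_ne_zero_of_mul hw (hL w v hn))
      omega
  ext u v
  by_contra hne
  have h1 := key _ u v hne
  have h2 := hlt v
  omega

lemma Acyclic.one_sub_mul_geom_sum (hG : G.Acyclic) {L : Matrix V V ℝ} (hL : G.LamCompat L) :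
    (1 - L) * ∑ k ∈ Finset.range (Fintype.card V), L ^ k = 1 := by
  rw [mul_neg_geom_sum, hG.pow_card_eq_zero hL, sub_zero]

lemma Acyclic.inv_one_sub (hG : G.Acyclic) {L : Matrix V V ℝ} (hL : G.LamCompat L) :
    (1 - L)⁻¹ = ∑ k ∈ Finset.range (Fintype.card V), L ^ k :=
  Matrix.inv_eq_right_inv (hG.one_sub_mul_geom_sum hL)

lemma Acyclic.isUnit_one_sub (hG : G.Acyclic) {L : Matrix V V ℝ} (hL : G.LamCompat L) :
    IsUnit (1 - L) :=
  IsUnit.of_mul_eq_one _ (hG.one_sub_mul_geom_sum hL)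

lemma posDef_congr {S A : Matrix V V ℝ} (hS : S.PosDef) (hA : IsUnit A) :
    (Aᵀ * S * A).PosDef := by
  have := hS.conjTranspose_mul_mul_same (Matrix.mulVec_injective_iff_isUnit.2 hA)
  rwa [Matrix.conjTranspose_eq_transpose_of_trivial] at this

lemma Acyclic.posDef_of_mem_model (hG : G.Acyclic) {S : Matrix V V ℝ} (hS : S ∈ G.model) :
    S.PosDef := by
  obtain ⟨L, Om, hL, hOm, rfl⟩ := hS
  exact posDef_congr hOm.1 (Matrix.isUnit_nonsing_inv_iff.2 (hG.isUnit_one_sub hL))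

lemma Acyclic.mem_model_iff (hG : G.Acyclic) {S : Matrix V V ℝ} :
    S ∈ G.model ↔ ∃ L, G.LamCompat L ∧ G.OmCompat ((1 - L)ᵀ * S * (1 - L)) := by
  constructor
  · rintro ⟨L, Om, hL, hOm, rfl⟩
    refine ⟨L, hL, ?_⟩
    have hu := (Matrix.isUnit_iff_isUnit_det _).1 (hG.isUnit_one_sub hL)
    have : (1 - L)ᵀ * (((1 - L)⁻¹)ᵀ * Om * (1 - L)⁻¹) * (1 - L) = Om := by
      rw [Matrix.mul_assoc, Matrix.mul_assoc _ _ (1 - L), Matrix.nonsing_inv_mul _ hu,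
        Matrix.mul_one, ← Matrix.mul_assoc, ← Matrix.transpose_mul, Matrix.nonsing_inv_mul _ hu,
        Matrix.transpose_one, Matrix.one_mul]
    rwa [this]
  · rintro ⟨L, hL, hOm⟩
    refine ⟨L, _, hL, hOm, ?_⟩
    have hu := (Matrix.isUnit_iff_isUnit_det _).1 (hG.isUnit_one_sub hL)
    rw [Matrix.mul_assoc, Matrix.mul_assoc _ _ (1 - L)⁻¹, Matrix.mul_nonsing_inv _ hu,
      Matrix.mul_one, ← Matrix.mul_assoc, ← Matrix.transpose_mul, Matrix.mul_nonsing_inv _ hu,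
      Matrix.transpose_one, Matrix.one_mul]

end Acyclic

section Density

variable {V : Type*} [Fintype V] [DecidableEq V] {G : MixedGraph V}

/-- The model contains a polynomial path from the identity to each of its points. -/
lemma Acyclic.exists_polynomial_path (hG : G.Acyclic) {S : Matrix V V ℝ} (hS : S ∈ G.model) :
    ∃ P : Matrix V V (Polynomial ℝ), P.map (Polynomial.eval 0) = 1 ∧
      P.map (Polynomial.eval 1) = S ∧
      ∀ t ∈ Set.Ioo (0 : ℝ) 1, P.map (Polynomial.eval t) ∈ G.model := by
  obtain ⟨L, Om, hL, hOm, rfl⟩ := hS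
  have hLt (t : ℝ) : G.LamCompat (t • L) := fun v w h => by simp [hL v w h]
  let N : Matrix V V (Polynomial ℝ) :=
    ∑ k ∈ Finset.range (Fintype.card V), (L.map fun a => Polynomial.X * Polynomial.C a) ^ k
  have hN (t : ℝ) : (Polynomial.evalRingHom t).mapMatrix N = (1 - t • L)⁻¹ := by
    rw [hG.inv_one_sub (hLt t), map_sum]
    refine Finset.sum_congr rfl fun k _ => ?_
    rw [map_pow]
    congr 1
    ext i j
    simp [mul_comm t]
  let W : Matrix V V (Polynomial ℝ) :=
    Om.map (fun a => Polynomial.X * Polynomial.C a) + (1 - Polynomial.X : Polynomial ℝ) • 1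
  have hW (t : ℝ) : (Polynomial.evalRingHom t).mapMatrix W = t • Om + (1 - t) • 1 := by
    ext i j
    by_cases hij : i = j <;> simp [W, hij, mul_comm t]
  have hP (t : ℝ) : (Nᵀ * W * N).map (Polynomial.eval t) =
      ((1 - t • L)⁻¹)ᵀ * (t • Om + (1 - t) • 1) * (1 - t • L)⁻¹ := by
    rw [← hN, ← hW]
    change (Polynomial.evalRingHom t).mapMatrix (Nᵀ * W * N) = _
    rw [map_mul, map_mul]
    rfl
  refine ⟨Nᵀ * W * N, by simp [hP], by simp [hP], fun t ht => ?_⟩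
  rw [hP]
  refine ⟨_, _, hLt t, ⟨?_, fun v w hvw h h' => ?_⟩, rfl⟩
  · exact (hOm.1.smul ht.1).add (Matrix.PosDef.one.smul (sub_pos.2 ht.2))
  · simp [hOm.2 v w hvw h h', hvw]

lemma Acyclic.model_subset_closure_evalMat_ne_zero (hG : G.Acyclic)
    {q : MvPolynomial (V × V) ℝ} (hq : evalMat 1 q ≠ 0) :
    G.model ⊆ closure {S | S ∈ G.model ∧ evalMat S q ≠ 0} := by
  intro S hS
  obtain ⟨P, hP0, hP1, hP⟩ := hG.exists_polynomial_path hS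
  let r : Polynomial ℝ := MvPolynomial.aeval (fun e => P e.1 e.2) q
  have hr (t : ℝ) : r.eval t = evalMat (P.map (Polynomial.eval t)) q := by
    have h : (Polynomial.evalRingHom t).comp
        (MvPolynomial.aeval (R := ℝ) fun e : V × V => P e.1 e.2).toRingHom =
        evalMat (P.map (Polynomial.eval t)) := by
      ext <;> simp [evalMat]
    exact congrArg (fun φ => φ q) h
  have hr0 : r ≠ 0 := by
    rintro h
    apply hq
    rw [← hP0, ← hr, h, Polynomial.eval_zero]
  have hfin : {t : ℝ | r.eval t = 0}.Finite := by
    refine r.roots.toFinset.finite_toSet.subset fun t ht => ?_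
    simpa [hr0] using ht
  have hmem : (1 : ℝ) ∈ closure (Set.Ioo (0 : ℝ) 1 ∩ {t : ℝ | r.eval t = 0}ᶜ) := by
    refine closure_minimal ((hfin.countable.dense_compl ℝ).open_subset_closure_inter isOpen_Ioo)
      isClosed_closure ?_
    rw [closure_Ioo zero_ne_one]
    simp
  have hcont : Continuous fun t : ℝ => P.map (Polynomial.eval t) :=
    continuous_matrix fun i j => (P i j).continuous
  rw [← hP1]
  refine map_mem_closure (f := fun t : ℝ => P.map (Polynomial.eval t)) hcont hmem
    fun t ht => ⟨hP t ht.1, ?_⟩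
  rw [← hr]
  exact ht.2

end Density

section Identification

variable {V : Type*} [Fintype V] [DecidableEq V] (G : MixedGraph V)

open Classical in
/-- The coefficient matrix of the linear system that identifies column `v` of the directed
coefficients, given the columns at the parents of `v`. -/
noncomputable def systemMatrix (S L : Matrix V V ℝ) (v : V) : Matrix V V ℝ :=
  Matrix.of fun u w => if G.D u v then ((1 - L)ᵀ * S : Matrix V V ℝ) u w else (1 : Matrix V V ℝ) u w

open Classical in
/-- The right-hand side of the linear system that identifies column `v`. -/
noncomputable def systemRhs (S L : Matrix V V ℝ) (v : V) : V → ℝ :=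
  fun u => if G.D u v then ((1 - L)ᵀ * S : Matrix V V ℝ) u v else 0

/-- One round of solving the linear systems of all columns. -/
noncomputable def solveStep (S L : Matrix V V ℝ) : Matrix V V ℝ :=
  Matrix.of fun u v => ((G.systemMatrix S L v)⁻¹ *ᵥ G.systemRhs S L v) u

/-- The directed coefficients identified from a covariance matrix `S`. -/
noncomputable def identify (S : Matrix V V ℝ) : Matrix V V ℝ :=
  (G.solveStep S)^[Fintype.card V] 0

variable {G}

lemma system_congr {S L L' : Matrix V V ℝ} {v : V}
    (h : ∀ u, G.D u v → ∀ w, L w u = L' w u) :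
    G.systemMatrix S L v = G.systemMatrix S L' v ∧ G.systemRhs S L v = G.systemRhs S L' v := by
  have key (u : V) (hu : G.D u v) (w : V) :
      ((1 - L)ᵀ * S : Matrix V V ℝ) u w = ((1 - L')ᵀ * S : Matrix V V ℝ) u w := by
    simp [Matrix.mul_apply, h u hu]
  constructor
  · ext u w
    by_cases hu : G.D u v <;> simp [systemMatrix, hu, key, -Matrix.transpose_sub]
  · ext u
    by_cases hu : G.D u v <;> simp [systemRhs, hu, key, -Matrix.transpose_sub]

lemma systemMatrix_mulVec_eq_iff {S L : Matrix V V ℝ} {v : V} :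
    G.systemMatrix S L v *ᵥ (fun u => L u v) = G.systemRhs S L v ↔
      (∀ u, ¬ G.D u v → L u v = 0) ∧
      ∀ u, G.D u v → ((1 - L)ᵀ * S * (1 - L) : Matrix V V ℝ) u v = 0 := by
  have hout (u : V) (hu : ¬ G.D u v) :
      (G.systemMatrix S L v *ᵥ fun u => L u v) u = L u v := by
    simp [systemMatrix, Matrix.mulVec, dotProduct, hu, Matrix.one_apply]
  have hin (u : V) (hu : G.D u v) : (G.systemMatrix S L v *ᵥ fun u => L u v) u =
      ((1 - L)ᵀ * S : Matrix V V ℝ) u v - ((1 - L)ᵀ * S * (1 - L) : Matrix V V ℝ) u v := by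
    rw [Matrix.mul_sub, Matrix.mul_one, Matrix.sub_apply, sub_sub_cancel, Matrix.mul_apply]
    simp [systemMatrix, Matrix.mulVec, dotProduct, hu]
  rw [funext_iff]
  constructor
  · intro h
    refine ⟨fun u hu => ?_, fun u hu => ?_⟩
    · simpa [hout u hu, systemRhs, hu] using h u
    · simpa [hin u hu, systemRhs, hu] using h u
  · rintro ⟨h0, h1⟩ u
    by_cases hu : G.D u v
    · simp [hin u hu, systemRhs, hu, h1 u hu, -Matrix.transpose_sub]
    · simp [hout u hu, systemRhs, hu, h0 u hu]

lemma Acyclic.solveStep_identify (hG : G.Acyclic) (S : Matrix V V ℝ) :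
    G.solveStep S (G.identify S) = G.identify S := by
  obtain ⟨h, hD, hlt⟩ := hG.exists_height
  have key : ∀ (k : ℕ) (v : V), h v < k → ∀ u,
      (G.solveStep S)^[k + 1] 0 u v = (G.solveStep S)^[k] 0 u v := by
    intro k
    induction k with
    | zero => intro v hv; omega
    | succ k ih =>
      intro v hv u
      have hc := system_congr (S := S) (v := v) fun w hw => ih w (by have := hD w v hw; omega)
      rw [Function.iterate_succ_apply' _ (k + 1), Function.iterate_succ_apply' _ k]
      rw [Function.iterate_succ_apply' _ k] at hc
      simp only [solveStep, Matrix.of_apply] at hc ⊢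
      rw [hc.1, hc.2]
  ext u v
  have := key _ v (hlt v) u
  rwa [Function.iterate_succ_apply'] at this

lemma Acyclic.systemMatrix_identify_mulVec (hG : G.Acyclic) {S : Matrix V V ℝ} {v : V}
    (hdet : (G.systemMatrix S (G.identify S) v).det ≠ 0) :
    G.systemMatrix S (G.identify S) v *ᵥ (fun u => G.identify S u v) =
      G.systemRhs S (G.identify S) v := by
  have h : (fun u => G.identify S u v) =
      (G.systemMatrix S (G.identify S) v)⁻¹ *ᵥ G.systemRhs S (G.identify S) v := by
    conv_lhs => rw [← hG.solveStep_identify S]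
    rfl
  rw [h, Matrix.mulVec_mulVec, Matrix.mul_nonsing_inv _ hdet.isUnit, Matrix.one_mulVec]

lemma Acyclic.eq_identify (hG : G.Acyclic) {S L : Matrix V V ℝ}
    (hdet : ∀ v, (G.systemMatrix S (G.identify S) v).det ≠ 0)
    (hL : ∀ v, G.systemMatrix S L v *ᵥ (fun u => L u v) = G.systemRhs S L v) :
    L = G.identify S := by
  obtain ⟨h, hD, -⟩ := hG.exists_height
  have key : ∀ (k : ℕ) (v : V), h v < k → ∀ u, L u v = G.identify S u v := by
    intro k
    induction k with
    | zero => intro v hv; omega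
    | succ k ih =>
      intro v hv
      have hc := system_congr (S := S) (v := v) fun w hw => ih w (by have := hD w v hw; omega)
      have h1 := hL v
      rw [hc.1, hc.2, ← hG.systemMatrix_identify_mulVec (hdet v)] at h1
      exact congrFun (Matrix.mulVec_injective_of_isUnit
        ((Matrix.isUnit_iff_isUnit_det _).2 (hdet v).isUnit) h1)
  ext u v
  exact key _ v (Nat.lt_succ_self _) u

lemma systemMatrix_one_zero (v : V) : G.systemMatrix 1 0 v = 1 := by
  ext u w
  simp [systemMatrix]

lemma systemRhs_one_zero (hG : G.Acyclic) (v : V) : G.systemRhs 1 0 v = 0 := by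
  ext u
  by_cases hu : G.D u v
  · have : u ≠ v := by
      rintro rfl
      exact hG u (.single hu)
    simp [systemRhs, this]
  · simp [systemRhs, hu]

lemma Acyclic.iterate_solveStep_one (hG : G.Acyclic) (k : ℕ) : (G.solveStep 1)^[k] 0 = 0 := by
  refine Function.iterate_fixed ?_ k
  ext u v
  simp [solveStep, systemRhs_one_zero hG]

open IsRegularAtOne

lemma isRegularAtOne_transpose_one_sub_mul {L : Matrix V V ℝ → Matrix V V ℝ}
    (hL : ∀ i j, IsRegularAtOne fun S => L S i j) (i j : V) :
    IsRegularAtOne fun S => ((1 - L S)ᵀ * S : Matrix V V ℝ) i j :=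
  matrix_mul (M := fun S => (1 - L S)ᵀ) (N := fun S => S)
    (fun i j => (const _).sub (hL j i)) entry i j

lemma isRegularAtOne_systemMatrix {L : Matrix V V ℝ → Matrix V V ℝ}
    (hL : ∀ i j, IsRegularAtOne fun S => L S i j) (v i j : V) :
    IsRegularAtOne fun S => G.systemMatrix S (L S) v i j := by
  by_cases h : G.D i v
  · simpa [systemMatrix, h] using isRegularAtOne_transpose_one_sub_mul hL i j
  · simpa [systemMatrix, h] using const _

lemma isRegularAtOne_systemRhs {L : Matrix V V ℝ → Matrix V V ℝ}
    (hL : ∀ i j, IsRegularAtOne fun S => L S i j) (v i : V) :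
    IsRegularAtOne fun S => G.systemRhs S (L S) v i := by
  by_cases h : G.D i v
  · simpa [systemRhs, h] using isRegularAtOne_transpose_one_sub_mul hL i v
  · simpa [systemRhs, h] using const _

lemma Acyclic.isRegularAtOne_iterate_solveStep (hG : G.Acyclic) (k : ℕ) (i j : V) :
    IsRegularAtOne fun S => (G.solveStep S)^[k] 0 i j := by
  induction k generalizing i j with
  | zero => simpa using const 0
  | succ k ih =>
    simp only [Function.iterate_succ_apply', solveStep, Matrix.of_apply, Matrix.mulVec, dotProduct]
    refine sum _ fun w _ => (matrix_inv
      (M := fun S => G.systemMatrix S ((G.solveStep S)^[k] 0) j) ?_ ?_ i w).mul ?_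
    · exact isRegularAtOne_systemMatrix ih j
    · simp [hG.iterate_solveStep_one, systemMatrix_one_zero]
    · exact isRegularAtOne_systemRhs ih j w

lemma IsBAP.systemMatrix_mulVec_eq (hG : G.IsBAP) {S L : Matrix V V ℝ} (hL : G.LamCompat L)
    (hOm : G.OmCompat ((1 - L)ᵀ * S * (1 - L))) (v : V) :
    G.systemMatrix S L v *ᵥ (fun u => L u v) = G.systemRhs S L v := by
  refine systemMatrix_mulVec_eq_iff.2 ⟨fun u hu => hL u v hu, fun u hu => ?_⟩
  have huv : u ≠ v := by
    rintro rfl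
    exact hG.1 u (.single hu)
  have hB : ¬ G.B u v := fun hB => (hG.2 u v huv).2.1 ⟨hu, hB⟩
  exact hOm.2 u v huv hB fun hB' => hB (G.symm _ _ hB')

/-- Outside a hypersurface that avoids the identity, the positive definite points of the algebraic
model of a bow-free acyclic path diagram belong to the model. -/
lemma IsBAP.exists_mem_model_of_mem_algModel (hG : G.IsBAP) :
    ∃ Q : MvPolynomial (V × V) ℝ, evalMat 1 Q ≠ 0 ∧
      ∀ S ∈ G.algModel, S.PosDef → evalMat S Q ≠ 0 → S ∈ G.model := by
  have hreg : ∀ i j, IsRegularAtOne fun S => G.identify S i j :=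
    hG.1.isRegularAtOne_iterate_solveStep _
  have hone : G.identify 1 = 0 := hG.1.iterate_solveStep_one _
  have hOm : ∀ i j, IsRegularAtOne fun S =>
      ((1 - G.identify S)ᵀ * S * (1 - G.identify S) : Matrix V V ℝ) i j :=
    matrix_mul (M := fun S => (1 - G.identify S)ᵀ * S) (N := fun S => 1 - G.identify S)
      (isRegularAtOne_transpose_one_sub_mul hreg) fun i j => (const _).sub (hreg i j)
  obtain ⟨a, b, hb, hab⟩ : IsRegularAtOne fun S =>
      ∏ v, (G.systemMatrix S (G.identify S) v).det :=
    prod _ fun v _ => det (isRegularAtOne_systemMatrix hreg v)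
  choose p q hq hpq using hOm
  have ha : evalMat 1 a ≠ 0 := by
    rw [← hab 1 hb]
    simpa [hone, systemMatrix_one_zero] using hb
  have hdet {S : Matrix V V ℝ} (hSa : evalMat S a ≠ 0) (hSb : evalMat S b ≠ 0) (v : V) :
      (G.systemMatrix S (G.identify S) v).det ≠ 0 := by
    rw [← hab S hSb] at hSa
    exact Finset.prod_ne_zero_iff.1 (right_ne_zero_of_mul hSa) v (Finset.mem_univ v)
  refine ⟨a * b * ∏ i, ∏ j, q i j, ?_, fun S hS hpos hSQ => ?_⟩
  · simp [ha, hb, Finset.prod_ne_zero_iff, hq]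
  simp only [map_mul, map_prod, mul_ne_zero_iff, Finset.prod_ne_zero_iff, Finset.mem_univ,
    true_imp_iff] at hSQ
  obtain ⟨⟨hSa, hSb⟩, hSq⟩ := hSQ
  have hsys (v : V) := systemMatrix_mulVec_eq_iff.1
    (hG.1.systemMatrix_identify_mulVec (hdet hSa hSb v))
  have hcompat : G.LamCompat (G.identify S) := fun u v huv => (hsys v).1 u huv
  refine hG.1.mem_model_iff.2
    ⟨_, hcompat, posDef_congr hpos (hG.1.isUnit_one_sub hcompat), fun v w hvw h h' => ?_⟩
  have hvanish : evalMat S (p v w * q v w * a * b) = 0 := by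
    refine hS _ fun T hT => ?_
    change evalMat T _ = 0
    by_contra hne
    simp only [map_mul, mul_ne_zero_iff] at hne
    obtain ⟨⟨⟨hTp, hTq⟩, hTa⟩, hTb⟩ := hne
    obtain ⟨L, hL, hOmL⟩ := hG.1.mem_model_iff.1 hT
    obtain rfl := hG.1.eq_identify (hdet hTa hTb) (hG.systemMatrix_mulVec_eq hL hOmL)
    apply hTp
    rw [← hpq v w T hTq]
    exact mul_eq_zero_of_right _ (hOmL.2 v w hvw h h')
  simp only [map_mul, mul_eq_zero, hSa, hSb, hSq v w, or_false] at hvanish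
  rw [← hpq v w S (hSq v w)] at hvanish
  exact (mul_eq_zero.1 hvanish).resolve_left (hSq v w)

end Identification

section ZariskiClosure

variable {V : Type*} [Fintype V] [DecidableEq V] {G G' : MixedGraph V}

lemma model_subset_algModel : G.model ⊆ G.algModel := fun S hS _ hp => hp S hS

lemma closure_model_subset_algModel : closure G.model ⊆ G.algModel := by
  intro S hS p hp
  have hcl : IsClosed {T : Matrix V V ℝ | MvPolynomial.eval (fun e => T e.1 e.2) p = 0} :=
    isClosed_eq ((MvPolynomial.continuous_eval p).comp
      (continuous_pi fun e => continuous_apply_apply e.1 e.2)) continuous_const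
  exact closure_minimal (fun T hT => hp T hT) hcl hS

lemma algModel_subset_of_model_subset (h : G.model ⊆ G'.algModel) : G.algModel ⊆ G'.algModel :=
  fun _ hS p hp => hS p fun _ hT => h hT p hp

end ZariskiClosure

end MixedGraph

/-- Theorem 4: For BAPs `G, G'`, the Euclidean closure of `M(G)` is
contained in the Euclidean closure of `M(G')` iff `A(G) ⊆ A(G')`. -/
theorem closure_model_subset_iff_algModel_subset
    {V : Type*} [Fintype V] [DecidableEq V]
    (G G' : MixedGraph V) (hG : G.IsBAP) (hG' : G'.IsBAP) :
    closure (G.model) ⊆ closure (G'.model) ↔ G.algModel ⊆ G'.algModel := by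
  constructor
  · intro h
    exact MixedGraph.algModel_subset_of_model_subset
      ((subset_closure.trans h).trans MixedGraph.closure_model_subset_algModel)
  · intro h
    obtain ⟨Q, hQ, hmem⟩ := hG'.exists_mem_model_of_mem_algModel
    refine closure_minimal
      ((hG.1.model_subset_closure_evalMat_ne_zero hQ).trans (closure_mono ?_)) isClosed_closure
    rintro S ⟨hS, hSQ⟩
    exact hmem S (h (MixedGraph.model_subset_algModel hS)) (hG.1.posDef_of_mem_model hS) hSQ
end

section
/- Let F be a finite field, n : ℕ, V = Fin n, and let (D, B) be an acyclic mixed graph on V. In R = MvPolynomial ((V × V) ⊕ (V × V)) F define symbolic matrices Λ̂, Ω̂ : Matrix V V R by: Λ̂ v w = X (Sum.inl (v,w)) if D v w, and Λ̂ v w = 0 otherwise; Ω̂ v v = X (Sum.inr (v,v)); and for v ≠ w, Ω̂ v w = X (Sum.inr (min v w, max v w)) if B v w, and 0 otherwise. Let ℓ : ℕ satisfy Λ̂ ^ (ℓ + 1) = 0 (ℓ bounds the length of the longest directed path), set Σ̂ = (∑_{i=0}^{ℓ} (Λ̂ᵀ) ^ i) * Ω̂ * (∑_{j=0}^{ℓ}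 Λ̂ ^ j), and for f : MvPolynomial (V × V) F set g = MvPolynomial.aeval (fun e => Σ̂ e.1 e.2) f ∈ R. If g ≠ 0, then the number of assignments x : ((V × V) ⊕ (V × V)) → F with MvPolynomial.eval x g = 0 is at most (2ℓ + 1) · f.totalDegree · |F| ^ (2 n ^ 2 − 1). (The error-probability bound of Theorem 2.) -/
open Matrix MvPolynomial

/-- Schwartz–Zippel over a finite field, for polynomials in an arbitrary finite set of variables,
in multiplicative form. -/
theorem card_eval_eq_zero_mul_card_le {σ F : Type*} [Fintype σ] [DecidableEq σ] [Field F]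
    [Fintype F] [DecidableEq F] {p : MvPolynomial σ F} (hp : p ≠ 0) :
    (Finset.univ.filter (fun x : σ → F => eval x p = 0)).card * Fintype.card F
      ≤ p.totalDegree * Fintype.card F ^ Fintype.card σ := by
  let e := Fintype.equivFin σ
  have hne : renameEquiv F e p ≠ 0 := EmbeddingLike.map_ne_zero_iff.2 hp
  have hsz := schwartz_zippel_totalDegree hne (Finset.univ : Finset F)
  have hcard : (Finset.univ.filter (fun x : σ → F => eval x p = 0)).card =
      ((Fintype.piFinset fun _ : Fin (Fintype.card σ) => (Finset.univ : Finset F)).filter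
        (fun x => eval x (renameEquiv F e p) = 0)).card := by
    refine Finset.card_equiv (e.arrowCongr (Equiv.refl F)) fun x => ?_
    simp [eval_rename, Function.comp_def]
  have hF : (0 : ℚ≥0) < Fintype.card F := by exact_mod_cast Fintype.card_pos
  rw [← hcard, totalDegree_renameEquiv, Finset.card_univ,
    div_le_div_iff₀ (pow_pos hF _) hF] at hsz
  exact_mod_cast hsz

/-- Substituting polynomials of degree at most `d` multiplies the total degree by at most `d`. -/
theorem totalDegree_aeval_le {σ τ R : Type*} [CommSemiring R] (s : σ → MvPolynomial τ R) {d : ℕ}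
    (hs : ∀ i, (s i).totalDegree ≤ d) (f : MvPolynomial σ R) :
    (aeval s f).totalDegree ≤ d * f.totalDegree := by
  rw [aeval_def, eval₂_eq]
  refine totalDegree_finsetSum_le fun m hm => ?_
  calc _ ≤ _ := totalDegree_mul _ _
    _ = (∏ i ∈ m.support, s i ^ m i).totalDegree := by simp [algebraMap_eq]
    _ ≤ ∑ i ∈ m.support, (s i ^ m i).totalDegree := totalDegree_finsetProd _ _
    _ ≤ ∑ i ∈ m.support, d * m i := Finset.sum_le_sum fun i _ =>
      (totalDegree_pow _ _).trans (by rw [mul_comm]; exact Nat.mul_le_mul_right _ (hs i))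
    _ = d * m.sum fun _ k => k := by rw [← Finset.mul_sum, Finsupp.sum]
    _ ≤ d * f.totalDegree := Nat.mul_le_mul_left _ (le_totalDegree hm)

section MatrixDegree

variable {ι σ R : Type*} [Fintype ι] [CommSemiring R] {M N : Matrix ι ι (MvPolynomial σ R)}

theorem totalDegree_matrix_mul_le {a b : ℕ} (hM : ∀ i j, (M i j).totalDegree ≤ a)
    (hN : ∀ i j, (N i j).totalDegree ≤ b) (i j : ι) : ((M * N) i j).totalDegree ≤ a + b := by
  rw [Matrix.mul_apply]
  exact totalDegree_finsetSum_le fun k _ =>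
    (totalDegree_mul _ _).trans (Nat.add_le_add (hM i k) (hN k j))

theorem totalDegree_matrix_pow_le [DecidableEq ι] (hM : ∀ i j, (M i j).totalDegree ≤ 1) (k : ℕ)
    (i j : ι) : ((M ^ k) i j).totalDegree ≤ k := by
  induction k generalizing i j with
  | zero =>
    rw [pow_zero, Matrix.one_apply]
    split_ifs <;> simp
  | succ k ih =>
    rw [pow_succ]
    exact totalDegree_matrix_mul_le ih hM i j

theorem totalDegree_matrix_geom_sum_le [DecidableEq ι] (hM : ∀ i j, (M i j).totalDegree ≤ 1)
    (l : ℕ) (i j : ι) : ((∑ k ∈ Finset.range (l + 1), M ^ k) i j).totalDegree ≤ l := by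
  rw [Matrix.sum_apply]
  exact totalDegree_finsetSum_le fun k hk =>
    (totalDegree_matrix_pow_le hM k i j).trans (Nat.lt_succ_iff.1 (Finset.mem_range.1 hk))

end MatrixDegree

/-- error-probability bound of Theorem 2, Schwartz–Zippel bound:
For an acyclic mixed graph `(D, B)` on `Fin n`, with symbolic parameter matrices
`Λ̂, Ω̂` over the polynomial ring `R = MvPolynomial ((V × V) ⊕ (V × V)) F`,
`Σ̂ = (∑ i ≤ ℓ, (Λ̂ᵀ)^i) * Ω̂ * (∑ j ≤ ℓ, Λ̂^j)` the symbolic covariance matrix, and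
`g = f(Σ̂)` nonzero, the number of evaluation points `x` at which `g` vanishes is at most
`(2ℓ + 1) · deg f · |F| ^ (2 n² − 1)`. -/
theorem schwartz_zippel_bound_for_constraint
    {F : Type*} [Field F] [Fintype F] [DecidableEq F] {n : ℕ}
    (D B : Fin n → Fin n → Prop)
    [∀ v w, Decidable (D v w)] [∀ v w, Decidable (B v w)]
    (hBsymm : ∀ v w, B v w → B w v) (hBirrefl : ∀ v, ¬ B v v)
    (hAcyclic : ∀ v, ¬ Relation.TransGen D v v)
    (Lam Om : Matrix (Fin n) (Fin n)
      (MvPolynomial ((Fin n × Fin n) ⊕ (Fin n × Fin n)) F))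
    (hLam : ∀ v w, Lam v w = if D v w then X (Sum.inl (v, w)) else 0)
    (hOmDiag : ∀ v, Om v v = X (Sum.inr (v, v)))
    (hOmOff : ∀ v w, v ≠ w →
      Om v w = if B v w then X (Sum.inr (min v w, max v w)) else 0)
    (ℓ : ℕ) (hNil : Lam ^ (ℓ + 1) = 0)
    (f : MvPolynomial (Fin n × Fin n) F)
    (Sig : Matrix (Fin n) (Fin n)
      (MvPolynomial ((Fin n × Fin n) ⊕ (Fin n × Fin n)) F))
    (hSig : Sig = (∑ i ∈ Finset.range (ℓ + 1), (Lamᵀ) ^ i) * Om *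
      (∑ j ∈ Finset.range (ℓ + 1), Lam ^ j))
    (g : MvPolynomial ((Fin n × Fin n) ⊕ (Fin n × Fin n)) F)
    (hg : g = MvPolynomial.aeval (fun e : Fin n × Fin n => Sig e.1 e.2) f)
    (hgne : g ≠ 0) :
    (Finset.univ.filter
        (fun x : ((Fin n × Fin n) ⊕ (Fin n × Fin n)) → F =>
          MvPolynomial.eval x g = 0)).card
      ≤ (2 * ℓ + 1) * f.totalDegree * Fintype.card F ^ (2 * n ^ 2 - 1) := by
  have hLamDeg : ∀ v w, (Lam v w).totalDegree ≤ 1 := fun v w => by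
    rw [hLam]
    split_ifs <;> simp
  have hOmDeg : ∀ v w, (Om v w).totalDegree ≤ 1 := fun v w => by
    rcases eq_or_ne v w with rfl | hvw
    · simp [hOmDiag]
    · rw [hOmOff v w hvw]
      split_ifs <;> simp
  have hSigDeg : ∀ e : Fin n × Fin n, (Sig e.1 e.2).totalDegree ≤ 2 * ℓ + 1 := fun e => by
    rw [hSig]
    refine (totalDegree_matrix_mul_le (totalDegree_matrix_mul_le
      (totalDegree_matrix_geom_sum_le (fun v w => hLamDeg w v) ℓ) hOmDeg)
      (totalDegree_matrix_geom_sum_le hLamDeg ℓ) e.1 e.2).trans ?_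
    omega
  have hgDeg : g.totalDegree ≤ (2 * ℓ + 1) * f.totalDegree :=
    hg ▸ totalDegree_aeval_le _ hSigDeg f
  have hcount := (card_eval_eq_zero_mul_card_le hgne).trans (Nat.mul_le_mul_right _ hgDeg)
  have hcardVars : Fintype.card ((Fin n × Fin n) ⊕ (Fin n × Fin n)) = 2 * n ^ 2 := by
    simp only [Fintype.card_sum, Fintype.card_prod, Fintype.card_fin]
    ring
  rw [hcardVars] at hcount
  have hF : 0 < Fintype.card F := Fintype.card_pos
  rcases Nat.eq_zero_or_pos n with rfl | hn
  · have hf : f.totalDegree = 0 := by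
      rw [f.eq_C_of_isEmpty, totalDegree_C]
    rw [hf, mul_zero, zero_mul] at hcount ⊢
    exact Nat.le_of_mul_le_mul_right (by simpa using hcount) hF
  · have hpos : 2 * n ^ 2 ≠ 0 := by positivity
    rw [← pow_sub_one_mul hpos, ← mul_assoc] at hcount
    exact Nat.le_of_mul_le_mul_right hcount hF
end

section
/- Let k be a field, n : ℕ, and R = MvPolynomial (Fin n) k. Let P be a prime ideal of R and J an ideal of R with ¬ (J ≤ P). Then the Krull dimension of R ⧸ (P ⊔ J) is strictly smaller than the Krull dimension of R ⧸ P: ringKrullDim (R ⧸ (P ⊔ J)) < ringKrullDim (R ⧸ P). (The commutative-algebra content of the dimension argument in Theorem 1: intersecting an irreducible variety with an algebraic set that does not contain it strictly drops the dimension.) -/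
/-- dimension argument of Theorem 1: in the polynomial ring
`R = MvPolynomial (Fin n) k`, if `P` is a prime ideal and `J` an ideal with `¬ J ≤ P`,
then the Krull dimension of `R ⧸ (P ⊔ J)` is strictly smaller than that of `R ⧸ P`. -/
theorem ringKrullDim_quotient_sup_lt
    {k : Type*} [Field k] {n : ℕ}
    (P J : Ideal (MvPolynomial (Fin n) k)) [P.IsPrime] (hJ : ¬ J ≤ P) :
    ringKrullDim (MvPolynomial (Fin n) k ⧸ (P ⊔ J)) <
      ringKrullDim (MvPolynomial (Fin n) k ⧸ P) := by
  obtain ⟨x, hxJ, hxP⟩ := SetLike.not_le_iff_exists.mp hJ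
  have hx : Ideal.Quotient.mk P x ∈ nonZeroDivisors (MvPolynomial (Fin n) k ⧸ P) :=
    mem_nonZeroDivisors_of_ne_zero (mt Ideal.Quotient.eq_zero_iff_mem.mp hxP)
  have hsucc : ringKrullDim (MvPolynomial (Fin n) k ⧸ (P ⊔ J)) + 1 ≤
      ringKrullDim (MvPolynomial (Fin n) k ⧸ P) :=
    ringKrullDim_succ_le_of_surjective (Ideal.Quotient.factor le_sup_left)
      (Ideal.Quotient.factor_surjective le_sup_left) hx
      (by simpa using Ideal.Quotient.eq_zero_iff_mem.mpr (Ideal.mem_sup_right hxJ))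
  have hfin : ringKrullDim (MvPolynomial (Fin n) k ⧸ P) ≠ ⊤ := by
    refine ne_top_of_le_ne_top ?_ (ringKrullDim_quotient_le P)
    rw [MvPolynomial.ringKrullDim_of_isNoetherianRing, ringKrullDim_eq_zero_of_field, zero_add]
    exact mt WithBot.coe_eq_top.mp (ENat.natCast_ne_top (Nat.card (Fin n)))
  have hbot : ringKrullDim (MvPolynomial (Fin n) k ⧸ P) ≠ ⊥ :=
    ne_bot_of_le_ne_bot WithBot.zero_ne_bot ringKrullDim_nonneg_of_nontrivial
  refine (ringKrullDim_le_of_surjective (Ideal.Quotient.factor le_sup_left)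
    (Ideal.Quotient.factor_surjective le_sup_left)).lt_of_ne fun h => ?_
  rw [h] at hsucc
  generalize ringKrullDim (MvPolynomial (Fin n) k ⧸ P) = d at hsucc hfin hbot
  lift d to ℕ∞ using hbot
  lift d to ℕ using fun h => hfin (by rw [h]; rfl)
  norm_cast at hsucc
  omega
end
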